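/- Let X^n, Y^n be finite-valued random sequences whose joint distribution factors as P(x^n, y^n) = Q(x_1^k||y_1^{k-1}) Q(x_{k+1}^n||y_{k+1}^{n-1}) P(y^n||x^n), i.e., the input causal conditioning distribution splits into independent blocks (X_1^k depending only on (x^{i-1}, y^{i-1}) within the first block, and X_{k+1}^n depending only on the second block's past). Then the directed information satisfies I(X^n -> Y^n) >= I(X^k -> Y^k) + I(X_{k+1}^n -> Y_{k+1}^n). -/

import Mathlib

/-- `Q` is a causal conditioning input distribution `Q(x^n ‖ y^{n-1})`:
nonnegative, normalized for every `y^n`, and the marginal of any length-`i`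
prefix of `x^n` depends on `y^n` only through its first `i-1` coordinates. -/
def IsCausalIn {X Y : Type} [Fintype X] [DecidableEq X] [Fintype Y] (n : ℕ)
    (Q : (Fin n → X) → (Fin n → Y) → ℝ) : Prop :=
  (∀ x y, 0 ≤ Q x y) ∧ (∀ y, ∑ x, Q x y = 1) ∧
  ∀ (i : ℕ), i ≤ n → ∀ (x : Fin n → X) (y y' : Fin n → Y),
    (∀ j : Fin n, (j : ℕ) + 1 < i → y j = y' j) →
    (∑ x' ∈ Finset.univ.filter
        (fun x' : Fin n → X => ∀ j : Fin n, (j : ℕ) < i → x' j = x j), Q x' y) =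
      ∑ x' ∈ Finset.univ.filter
        (fun x' : Fin n → X => ∀ j : Fin n, (j : ℕ) < i → x' j = x j), Q x' y'

/-- `P` is a channel causal conditioning distribution `P(y^n ‖ x^n)`:
nonnegative, normalized for every `x^n`, and the marginal of any length-`i`
prefix of `y^n` depends on `x^n` only through its first `i` coordinates. -/
def IsCausalCh {X Y : Type} [Fintype X] [Fintype Y] [DecidableEq Y] (n : ℕ)
    (P : (Fin n → Y) → (Fin n → X) → ℝ) : Prop :=
  (∀ y x, 0 ≤ P y x) ∧ (∀ x, ∑ y, P y x = 1) ∧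
  ∀ (i : ℕ), i ≤ n → ∀ (y : Fin n → Y) (x x' : Fin n → X),
    (∀ j : Fin n, (j : ℕ) < i → x j = x' j) →
    (∑ y' ∈ Finset.univ.filter
        (fun y' : Fin n → Y => ∀ j : Fin n, (j : ℕ) < i → y' j = y j), P y' x) =
      ∑ y' ∈ Finset.univ.filter
        (fun y' : Fin n → Y => ∀ j : Fin n, (j : ℕ) < i → y' j = y j), P y' x'

/-- Directed information functional
`I(Q;P) = ∑_{x^n,y^n} Q(x^n‖y^{n-1}) P(y^n‖x^n) log (P(y^n‖x^n) / ∑_{x'} Q(x'‖y^{n-1}) P(y^n‖x'))`. -/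
noncomputable def DI {X Y : Type} [Fintype X] [Fintype Y] (n : ℕ)
    (Q : (Fin n → X) → (Fin n → Y) → ℝ)
    (P : (Fin n → Y) → (Fin n → X) → ℝ) : ℝ :=
  ∑ x, ∑ y, Q x y * P y x * Real.log (P y x / ∑ x', Q x' y * P y x')


/-- Conditional mutual information `I(f(ω); g(ω) | h(ω))` of finite-valued random
variables under the pmf `p` on a finite sample space `Ω`, defined by the usual sum
`∑ q(a,b,c) log (q(a,b,c) q(c) / (q(a,c) q(b,c)))`. -/
noncomputable def condMI {Ω A B C : Type} [Fintype Ω] [Fintype A] [Fintype B] [Fintype C]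
    [DecidableEq A] [DecidableEq B] [DecidableEq C]
    (p : Ω → ℝ) (f : Ω → A) (g : Ω → B) (h : Ω → C) : ℝ :=
  ∑ a : A, ∑ b : B, ∑ c : C,
    (∑ ω ∈ Finset.univ.filter (fun ω => f ω = a ∧ g ω = b ∧ h ω = c), p ω) *
      Real.log
        (((∑ ω ∈ Finset.univ.filter (fun ω => f ω = a ∧ g ω = b ∧ h ω = c), p ω) *
            (∑ ω ∈ Finset.univ.filter (fun ω => h ω = c), p ω)) /
          ((∑ ω ∈ Finset.univ.filter (fun ω => f ω = a ∧ h ω = c), p ω) *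
            (∑ ω ∈ Finset.univ.filter (fun ω => g ω = b ∧ h ω = c), p ω)))



open Finset

section Entropy

variable {Ω A B C : Type} [Fintype Ω]

open Classical in
/-- Mass of the class of `ω` under the relation `r`. -/
noncomputable def relMass (p : Ω → ℝ) (r : Ω → Ω → Prop) (ω : Ω) : ℝ :=
  ∑ ω' ∈ univ.filter (fun ω' => r ω ω'), p ω'

/-- Entropy of the partition of the sample space given by the relation `r`. -/
noncomputable def relEntropy (p : Ω → ℝ) (r : Ω → Ω → Prop) : ℝ :=
  -∑ ω, p ω * Real.log (relMass p r ω)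

lemma relMass_pos {p : Ω → ℝ} (hp : ∀ ω, 0 ≤ p ω) {r : Ω → Ω → Prop} {ω : Ω}
    (hr : r ω ω) (hω : 0 < p ω) : 0 < relMass p r ω := by
  classical
  exact sum_pos' (fun i _ => hp i) ⟨ω, by simpa using hr, hω⟩

variable [Fintype A] [Fintype B] [Fintype C] [DecidableEq A] [DecidableEq B] [DecidableEq C]

lemma condMI_eq_relEntropy {p : Ω → ℝ} (hp : ∀ ω, 0 ≤ p ω) (f : Ω → A) (g : Ω → B) (h : Ω → C)
    {rfh rgh rfgh rh : Ω → Ω → Prop}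
    (hfh : ∀ ω ω', (f ω' = f ω ∧ h ω' = h ω) ↔ rfh ω ω')
    (hgh : ∀ ω ω', (g ω' = g ω ∧ h ω' = h ω) ↔ rgh ω ω')
    (hfgh : ∀ ω ω', (f ω' = f ω ∧ g ω' = g ω ∧ h ω' = h ω) ↔ rfgh ω ω')
    (hh : ∀ ω ω', h ω' = h ω ↔ rh ω ω') :
    condMI p f g h =
      relEntropy p rfh + relEntropy p rgh - relEntropy p rfgh - relEntropy p rh := by
  classical
  have key : condMI p f g h = ∑ ω, p ω * Real.log
      ((relMass p rfgh ω * relMass p rh ω) / (relMass p rfh ω * relMass p rgh ω)) := by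
    have e : ∀ L : A × B × C → ℝ,
        ∑ ω, p ω * L (f ω, g ω, h ω) =
          ∑ a, ∑ b, ∑ c, (∑ ω with f ω = a ∧ g ω = b ∧ h ω = c, p ω) * L (a, b, c) := by
      intro L
      rw [← sum_fiberwise (s := univ) (g := fun ω => (f ω, g ω, h ω)), Fintype.sum_prod_type]
      refine sum_congr rfl fun a _ => ?_
      rw [Fintype.sum_prod_type]
      refine sum_congr rfl fun b _ => sum_congr rfl fun c _ => ?_
      rw [sum_mul]
      refine sum_congr (by ext; simp) ?_
      intro ω hω
      simp only [mem_filter, mem_univ, true_and] at hω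
      rw [hω.1, hω.2.1, hω.2.2]
    have e' := e (fun t => Real.log
        (((∑ ω ∈ univ.filter (fun ω => f ω = t.1 ∧ g ω = t.2.1 ∧ h ω = t.2.2), p ω) *
            (∑ ω ∈ univ.filter (fun ω => h ω = t.2.2), p ω)) /
          ((∑ ω ∈ univ.filter (fun ω => f ω = t.1 ∧ h ω = t.2.2), p ω) *
            (∑ ω ∈ univ.filter (fun ω => g ω = t.2.1 ∧ h ω = t.2.2), p ω))))
    rw [condMI, ← e']
    simp only [relMass, ← hfh, ← hgh, ← hfgh, ← hh]
  rw [key]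
  simp only [relEntropy]
  rw [← sub_eq_zero]
  simp only [← sum_neg_distrib, ← sum_add_distrib, ← sum_sub_distrib]
  refine sum_eq_zero fun ω _ => ?_
  rcases (hp ω).eq_or_lt with h0 | h0
  · simp [← h0]
  · have h1 := (relMass_pos hp ((hfh ω ω).1 ⟨rfl, rfl⟩) h0).ne'
    have h2 := (relMass_pos hp ((hgh ω ω).1 ⟨rfl, rfl⟩) h0).ne'
    have h3 := (relMass_pos hp ((hfgh ω ω).1 ⟨rfl, rfl, rfl⟩) h0).ne'
    have h4 := (relMass_pos hp ((hh ω ω).1 rfl) h0).ne'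
    rw [Real.log_div (mul_ne_zero h3 h4) (mul_ne_zero h1 h2), Real.log_mul h3 h4,
      Real.log_mul h1 h2]
    ring

lemma condMI_nonneg {p : Ω → ℝ} (hp : ∀ ω, 0 ≤ p ω) (f : Ω → A) (g : Ω → B) (h : Ω → C) :
    0 ≤ condMI p f g h := by
  set qfgh : A → B → C → ℝ := fun a b c => ∑ ω with f ω = a ∧ g ω = b ∧ h ω = c, p ω with hqfgh
  set qh : C → ℝ := fun c => ∑ ω with h ω = c, p ω with hqh
  set qfh : A → C → ℝ := fun a c => ∑ ω with f ω = a ∧ h ω = c, p ω with hqfh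
  set qgh : B → C → ℝ := fun b c => ∑ ω with g ω = b ∧ h ω = c, p ω with hqgh
  have hf : ∀ c, ∑ a, qfh a c = qh c := fun c => by
    simp only [hqfh, hqh]
    rw [← sum_fiberwise (s := univ.filter fun ω => h ω = c) (g := f)]
    simp only [filter_filter, and_comm]
  have hg : ∀ c, ∑ b, qgh b c = qh c := fun c => by
    simp only [hqgh, hqh]
    rw [← sum_fiberwise (s := univ.filter fun ω => h ω = c) (g := g)]
    simp only [filter_filter, and_comm]
  have hfg : ∀ c, ∑ a, ∑ b, qfgh a b c = qh c := fun c => by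
    rw [← hf]
    refine sum_congr rfl fun a _ => ?_
    simp only [hqfh, hqfgh]
    rw [← sum_fiberwise (s := univ.filter fun ω => f ω = a ∧ h ω = c) (g := g)]
    simp only [filter_filter]
    refine sum_congr rfl fun b _ => sum_congr ?_ fun _ _ => rfl
    ext; simp; tauto
  have term : ∀ a b c, qfgh a b c - qfh a c * qgh b c / qh c ≤
      qfgh a b c * Real.log ((qfgh a b c * qh c) / (qfh a c * qgh b c)) := by
    intro a b c
    have n1 : 0 ≤ qfgh a b c := sum_nonneg fun i _ => hp i
    have n2 : 0 ≤ qfh a c := sum_nonneg fun i _ => hp i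
    have n3 : 0 ≤ qgh b c := sum_nonneg fun i _ => hp i
    have n4 : 0 ≤ qh c := sum_nonneg fun i _ => hp i
    rcases n1.eq_or_lt with h0 | h0
    · rw [← h0]
      have : 0 ≤ qfh a c * qgh b c / qh c := by positivity
      linarith
    · have m2 : 0 < qfh a c := h0.trans_le <|
        sum_le_sum_of_subset_of_nonneg (fun ω => by simp; tauto) fun i _ _ => hp i
      have m3 : 0 < qgh b c := h0.trans_le <|
        sum_le_sum_of_subset_of_nonneg (fun ω => by simp) fun i _ _ => hp i
      have m4 : 0 < qh c := h0.trans_le <|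
        sum_le_sum_of_subset_of_nonneg (fun ω => by simp) fun i _ _ => hp i
      have := mul_le_mul_of_nonneg_left (Real.one_sub_inv_le_log_of_pos
        (x := (qfgh a b c * qh c) / (qfh a c * qgh b c)) (by positivity)) n1
      refine le_trans (le_of_eq ?_) this
      field_simp
  have : ∑ a, ∑ b, ∑ c, (qfgh a b c - qfh a c * qgh b c / qh c) ≤ condMI p f g h :=
    sum_le_sum fun a _ => sum_le_sum fun b _ => sum_le_sum fun c _ => term a b c
  refine le_trans (le_of_eq ?_) this
  have swap : ∀ F : A → B → C → ℝ, ∑ a, ∑ b, ∑ c, F a b c = ∑ c, ∑ a, ∑ b, F a b c := by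
    intro F
    rw [sum_comm (s := univ (α := C))]
    exact sum_congr rfl fun a _ => sum_comm
  rw [swap, eq_comm]
  refine sum_eq_zero fun c _ => ?_
  simp only [sum_sub_distrib, hfg, ← sum_div, ← mul_sum, ← sum_mul, hf, hg]
  rw [mul_self_div_self, sub_self]

end Entropy

section Blocks

variable {α : Type} {n : ℕ}

/-- The first `k` coordinates of a sequence. -/
def headBlock {k : ℕ} (hk : k ≤ n) (x : Fin n → α) : Fin k → α :=
  fun j => x (Fin.castLE hk j)

/-- The coordinates of a sequence from `k` on. -/
def tailBlock (k : ℕ) (x : Fin n → α) : Fin (n - k) → α :=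
  fun j => x ((Fin.natAdd k j).cast (by have := j.isLt; omega))

/-- The sequence `x` with its first `k` coordinates replaced by `u`. -/
def replaceHead {k : ℕ} (u : Fin k → α) (x : Fin n → α) : Fin n → α :=
  fun j => if h : (j : ℕ) < k then u ⟨j, h⟩ else x j

lemma headBlock_replaceHead {k : ℕ} (hk : k ≤ n) (u : Fin k → α) (x : Fin n → α) :
    headBlock hk (replaceHead u x) = u := by
  ext j; simp [headBlock, replaceHead]

lemma tailBlock_replaceHead {k : ℕ} (u : Fin k → α) (x : Fin n → α) :
    tailBlock k (replaceHead u x) = tailBlock k x := by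
  ext j; simp [tailBlock, replaceHead]

end Blocks

section Prefix

variable {α β : Type} [Fintype α] [DecidableEq α] [Fintype β] [DecidableEq β] {n : ℕ}

/-- The sequences of length `n` that agree with `x` on the first `i` coordinates. -/
def prefixClass (i : ℕ) (x : Fin n → α) : Finset (Fin n → α) :=
  univ.filter fun x' => ∀ j : Fin n, (j : ℕ) < i → x' j = x j

lemma mem_prefixClass {i : ℕ} {x x' : Fin n → α} :
    x' ∈ prefixClass i x ↔ ∀ j : Fin n, (j : ℕ) < i → x' j = x j := by
  simp [prefixClass]

lemma prefixClass_self (x : Fin n → α) : prefixClass n x = {x} := by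
  ext x'
  simp only [mem_prefixClass, mem_singleton, funext_iff]
  exact forall_congr' fun j => by simp [j.isLt]

lemma sum_prefixClass_update (F : (Fin n → α) → ℝ) {i : ℕ} (hi : i < n) (x : Fin n → α) :
    ∑ x' ∈ prefixClass i x, F x' =
      ∑ v, ∑ x' ∈ prefixClass (i + 1) (Function.update x ⟨i, hi⟩ v), F x' := by
  rw [← sum_fiberwise (s := prefixClass i x) (g := fun x' => x' ⟨i, hi⟩)]
  refine sum_congr rfl fun v _ => sum_congr ?_ fun _ _ => rfl
  ext x'
  simp only [mem_filter, mem_prefixClass]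
  constructor
  · rintro ⟨h, rfl⟩ j hj
    rcases eq_or_ne j ⟨i, hi⟩ with rfl | hne
    · simp
    · rw [Function.update_of_ne hne]
      exact h j (by have : j.val ≠ i := fun h => hne (Fin.ext h); omega)
  · intro h
    refine ⟨fun j hj => ?_, by simpa using h ⟨i, hi⟩ (by simp)⟩
    rw [h j (by omega), Function.update_of_ne]
    rintro rfl
    simp at hj

/-- If from index `k` on the prefix marginals of `Q` and `P` are causal, then the prefix
marginals of the joint weight `Q * P` factor. -/
lemma sum_prefixClass_mul {k : ℕ} (Q : (Fin n → α) → (Fin n → β) → ℝ)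
    (P : (Fin n → β) → (Fin n → α) → ℝ)
    (hQ : ∀ i, k ≤ i → i < n → ∀ x y y', (∀ j : Fin n, (j : ℕ) < i → y j = y' j) →
      ∑ x' ∈ prefixClass (i + 1) x, Q x' y = ∑ x' ∈ prefixClass (i + 1) x, Q x' y')
    (hP : ∀ i, i ≤ n → ∀ y x x', (∀ j : Fin n, (j : ℕ) < i → x j = x' j) →
      ∑ y' ∈ prefixClass i y, P y' x = ∑ y' ∈ prefixClass i y, P y' x')
    {i : ℕ} (hki : k ≤ i) (hin : i ≤ n) :
    (∀ x y, ∑ x' ∈ prefixClass i x, ∑ y' ∈ prefixClass i y, Q x' y' * P y' x' =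
      (∑ x' ∈ prefixClass i x, Q x' y) * ∑ y' ∈ prefixClass i y, P y' x) ∧
    (i < n → ∀ x y, ∑ x' ∈ prefixClass (i + 1) x, ∑ y' ∈ prefixClass i y, Q x' y' * P y' x' =
      (∑ x' ∈ prefixClass (i + 1) x, Q x' y) * ∑ y' ∈ prefixClass i y, P y' x) := by
  induction hin using Nat.decreasingInduction with
  | self => exact ⟨fun x y => by simp [prefixClass_self], fun h => absurd h (lt_irrefl n)⟩
  | of_succ i hi ih =>
    have ih := (ih (by omega)).1
    have agree : ∀ {γ : Type} (z : Fin n → γ) (v : γ) (j : Fin n), (j : ℕ) < i →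
        Function.update z ⟨i, hi⟩ v j = z j := by
      intro γ z v j hj
      rw [Function.update_of_ne]
      rintro rfl
      simp at hj
    have second : ∀ x y, ∑ x' ∈ prefixClass (i + 1) x, ∑ y' ∈ prefixClass i y, Q x' y' * P y' x' =
        (∑ x' ∈ prefixClass (i + 1) x, Q x' y) * ∑ y' ∈ prefixClass i y, P y' x := by
      intro x y
      simp only [sum_prefixClass_update _ hi y]
      rw [sum_comm, mul_sum]
      refine sum_congr rfl fun v _ => ?_
      rw [ih, hQ i hki hi x _ y (agree y v)]
    refine ⟨fun x y => ?_, fun _ => second⟩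
    rw [sum_prefixClass_update _ hi x, sum_prefixClass_update _ hi x, sum_mul]
    refine sum_congr rfl fun v _ => ?_
    rw [second, hP i hi.le y _ x (agree x v)]

lemma sum_prefixClass_tailBlock {k : ℕ} (hk : k ≤ n) (c : (Fin k → α) → ℝ)
    (F : (Fin (n - k) → α) → ℝ) (t : ℕ) (x : Fin n → α) :
    ∑ x' ∈ prefixClass (k + t) x, c (headBlock hk x') * F (tailBlock k x') =
      c (headBlock hk x) * ∑ z ∈ prefixClass t (tailBlock k x), F z := by
  rw [mul_sum]
  have hhead : ∀ x' ∈ prefixClass (k + t) x, headBlock hk x' = headBlock hk x := by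
    intro x' hx'
    ext j
    exact mem_prefixClass.1 hx' _ (by have := j.isLt; simp; omega)
  refine sum_nbij' (tailBlock k)
    (fun z j => if h : (j : ℕ) < k then x j else z ⟨j - k, by omega⟩) ?_ ?_ ?_ ?_ ?_
  · intro x' hx'
    rw [mem_prefixClass] at hx' ⊢
    intro j hj
    exact hx' _ (by simpa using hj)
  · intro z hz
    rw [mem_prefixClass] at hz ⊢
    intro j hj
    by_cases h : (j : ℕ) < k
    · simp [h]
    · simp only [h, dif_neg, not_false_eq_true]
      rw [hz _ (by simp; omega)]
      simp only [tailBlock]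
      congr 1
      ext
      simp
      omega
  · intro x' hx'
    ext j
    by_cases h : (j : ℕ) < k
    · simp only [h, dif_pos]
      exact (mem_prefixClass.1 hx' j (by omega)).symm
    · simp only [h, dif_neg, not_false_eq_true, tailBlock]
      congr 1
      ext
      simp
      omega
  · intro z _
    ext j
    simp [tailBlock]
  · intro x' hx'
    rw [hhead x' hx']

end Prefix

section Window

variable {X Y : Type} {n : ℕ}

/-- Agreement of the `X`-coordinates in `[a, s)` and of the `Y`-coordinates in `[c, t)`. -/
def windowRel (n a s c t : ℕ) (ω ω' : (Fin n → X) × (Fin n → Y)) : Prop :=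
  (∀ j : Fin n, a ≤ j → (j : ℕ) < s → ω'.1 j = ω.1 j) ∧
    ∀ j : Fin n, c ≤ j → (j : ℕ) < t → ω'.2 j = ω.2 j

variable [Fintype X] [Fintype Y]

/-- Joint entropy of the `X`-coordinates in `[a, s)` and the `Y`-coordinates in `[c, t)`. -/
noncomputable def windowEntropy (p : (Fin n → X) × (Fin n → Y) → ℝ) (a s c t : ℕ) : ℝ :=
  relEntropy p (windowRel n a s c t)

variable {p : (Fin n → X) × (Fin n → Y) → ℝ}

lemma condMI_eq_windowEntropy [DecidableEq Y] {B C : Type} [Fintype B] [Fintype C]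
    [DecidableEq B] [DecidableEq C] (hp : ∀ ω, 0 ≤ p ω)
    {a i : ℕ} (hai : a ≤ i) (hi : i < n)
    (g : (Fin n → X) × (Fin n → Y) → B) (h : (Fin n → X) × (Fin n → Y) → C)
    (hg : ∀ ω ω', g ω' = g ω ↔ ∀ j : Fin n, a ≤ j → (j : ℕ) < i + 1 → ω'.1 j = ω.1 j)
    (hh : ∀ ω ω', h ω' = h ω ↔ ∀ j : Fin n, a ≤ j → (j : ℕ) < i → ω'.2 j = ω.2 j) :
    condMI p (fun ω => ω.2 ⟨i, hi⟩) g h =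
      windowEntropy p 0 0 a (i + 1) + windowEntropy p a (i + 1) a i -
        windowEntropy p a (i + 1) a (i + 1) - windowEntropy p 0 0 a i := by
  have last : ∀ ω ω' : (Fin n → X) × (Fin n → Y),
      (ω'.2 ⟨i, hi⟩ = ω.2 ⟨i, hi⟩ ∧ ∀ j : Fin n, a ≤ j → (j : ℕ) < i → ω'.2 j = ω.2 j) ↔
        ∀ j : Fin n, a ≤ j → (j : ℕ) < i + 1 → ω'.2 j = ω.2 j := by
    intro ω ω'
    constructor
    · rintro ⟨h1, h2⟩ j hj hj'
      rcases Nat.lt_succ_iff_lt_or_eq.1 hj' with h | rfl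
      · exact h2 j hj h
      · exact h1
    · exact fun h => ⟨h _ hai (Nat.lt_succ_self i), fun j hj hj' => h j hj (by omega)⟩
  refine condMI_eq_relEntropy hp _ g h ?_ ?_ ?_ ?_ <;> intro ω ω' <;>
    simp only [hg, hh, windowRel, ← last] <;> simp
  tauto

lemma headBlock_eq_iff {α : Type} {k : ℕ} (hk : k ≤ n) (x x' : Fin n → α) :
    headBlock hk x' = headBlock hk x ↔ ∀ j : Fin n, (j : ℕ) < k → x' j = x j :=
  ⟨fun h j hj => congrFun h ⟨j, hj⟩, fun h => funext fun j => h _ j.isLt⟩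

lemma tailBlock_eq_iff {α : Type} {k : ℕ} (x x' : Fin n → α) :
    tailBlock k x' = tailBlock k x ↔ ∀ j : Fin n, k ≤ j → x' j = x j := by
  refine ⟨fun h j hj => ?_, fun h => funext fun j => h _ (by simp)⟩
  have := congrFun h ⟨j - k, by omega⟩
  simpa [tailBlock, Nat.add_sub_cancel' hj] using this

/-- The mutual information between the blocks is at least that between their `Y`-parts. -/
lemma windowEntropy_data_processing [DecidableEq X] [DecidableEq Y] (hp : ∀ ω, 0 ≤ p ω)
    {k : ℕ} (hk : k ≤ n) :
    windowEntropy p 0 0 0 k + windowEntropy p 0 0 k n - windowEntropy p 0 0 0 n ≤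
      windowEntropy p 0 k 0 k + windowEntropy p k n k n - windowEntropy p 0 n 0 n := by
  have split : ∀ {α : Type} (x x' : Fin n → α),
      ((∀ j : Fin n, (j : ℕ) < k → x' j = x j) ∧ ∀ j : Fin n, k ≤ j → x' j = x j) ↔
        ∀ j, x' j = x j := fun x x' =>
    ⟨fun h j => (lt_or_ge (j : ℕ) k).elim (h.1 j) (h.2 j), fun h => ⟨fun j _ => h j, fun j _ => h j⟩⟩
  have h1 := condMI_nonneg hp (fun ω => headBlock hk ω.1)
    (fun ω => (tailBlock k ω.1, tailBlock k ω.2)) (fun ω => headBlock hk ω.2)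
  rw [condMI_eq_relEntropy hp _ _ _ (rfh := windowRel n 0 k 0 k) (rgh := windowRel n k n 0 n)
    (rfgh := windowRel n 0 n 0 n) (rh := windowRel n 0 0 0 k)] at h1
  · have h2 := condMI_nonneg hp (fun ω => headBlock hk ω.2)
      (fun ω => tailBlock k ω.1) (fun ω => tailBlock k ω.2)
    rw [condMI_eq_relEntropy hp _ _ _ (rfh := windowRel n 0 0 0 n) (rgh := windowRel n k n k n)
      (rfgh := windowRel n k n 0 n) (rh := windowRel n 0 0 k n)] at h2
    · simp only [windowEntropy]
      linarith
    all_goals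
      intro ω ω'
      simp [windowRel, headBlock_eq_iff, tailBlock_eq_iff, ← split]
    all_goals tauto
  all_goals
    intro ω ω'
    simp [windowRel, headBlock_eq_iff, tailBlock_eq_iff, ← split]
  all_goals tauto

variable [DecidableEq X] [DecidableEq Y]

lemma relMass_windowRel_zero (s t : ℕ) (x : Fin n → X) (y : Fin n → Y) :
    relMass p (windowRel n 0 s 0 t) (x, y) =
      ∑ x' ∈ prefixClass s x, ∑ y' ∈ prefixClass t y, p (x', y') := by
  rw [relMass, ← sum_product']
  refine sum_congr ?_ fun _ _ => rfl
  ext ω'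
  simp [windowRel, mem_prefixClass]

lemma relMass_windowRel_eq_sum {k s t : ℕ} (hk : k ≤ n) (hs : k ≤ s) (ht : k ≤ t)
    (x : Fin n → X) (y : Fin n → Y) :
    relMass p (windowRel n k s k t) (x, y) =
      ∑ w : (Fin k → X) × (Fin k → Y),
        relMass p (windowRel n 0 s 0 t) (replaceHead w.1 x, replaceHead w.2 y) := by
  classical
  simp only [relMass]
  rw [← sum_fiberwise (g := fun ω : (Fin n → X) × (Fin n → Y) =>
    (headBlock hk ω.1, headBlock hk ω.2))]
  refine sum_congr rfl fun w _ => sum_congr ?_ fun _ _ => rfl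
  have key : ∀ {α : Type} (u : Fin k → α) (z z' : Fin n → α) (r : ℕ), k ≤ r →
      (((∀ j : Fin n, k ≤ j → (j : ℕ) < r → z' j = z j) ∧ headBlock hk z' = u) ↔
        ∀ j : Fin n, 0 ≤ (j : ℕ) → (j : ℕ) < r → z' j = replaceHead u z j) := by
    intro α u z z' r hr
    constructor
    · rintro ⟨h, rfl⟩ j _ hj
      by_cases hjk : (j : ℕ) < k
      · simp [replaceHead, hjk, headBlock]
      · simpa [replaceHead, hjk] using h j (by omega) hj
    · intro h
      refine ⟨fun j hj hj' => ?_, funext fun j => ?_⟩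
      · simpa [replaceHead, hj.not_gt] using h j (Nat.zero_le _) hj'
      · have := h ⟨j, by omega⟩ (Nat.zero_le _) (by simp; omega)
        simpa [replaceHead, headBlock, Fin.castLE] using this
  ext ω'
  rw [mem_filter, mem_filter, mem_filter]
  simp only [mem_univ, true_and, windowRel, Prod.ext_iff, ← key _ _ _ _ hs,
    ← key _ _ _ _ ht]
  tauto

/-- Given the past of the second block, its next input is independent of the first block. -/
lemma windowEntropy_add_eq {k : ℕ} (hk : k ≤ n) (hp : ∀ ω, 0 ≤ p ω)
    {Qa : (Fin k → X) → (Fin k → Y) → ℝ} {Qb : (Fin (n - k) → X) → (Fin (n - k) → Y) → ℝ}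
    {P : (Fin n → Y) → (Fin n → X) → ℝ} (hQb : IsCausalIn (n - k) Qb) (hP : IsCausalCh n P)
    (hfact : ∀ x y, p (x, y) =
      Qa (headBlock hk x) (headBlock hk y) * Qb (tailBlock k x) (tailBlock k y) * P y x)
    {t : ℕ} (ht : k + t < n) :
    windowEntropy p 0 (k + t) 0 (k + t) + windowEntropy p k (k + t + 1) k (k + t) =
      windowEntropy p 0 (k + t + 1) 0 (k + t) + windowEntropy p k (k + t) k (k + t) := by
  have hQ : ∀ (r : ℕ) (x : Fin n → X) (y : Fin n → Y), ∑ x' ∈ prefixClass (k + r) x,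
      Qa (headBlock hk x') (headBlock hk y) * Qb (tailBlock k x') (tailBlock k y) =
      Qa (headBlock hk x) (headBlock hk y) *
        ∑ z ∈ prefixClass r (tailBlock k x), Qb z (tailBlock k y) := fun r x y =>
    sum_prefixClass_tailBlock hk (fun u => Qa u (headBlock hk y))
      (fun z => Qb z (tailBlock k y)) r x
  have hfactor := sum_prefixClass_mul (k := k) (i := k + t)
    (fun x y => Qa (headBlock hk x) (headBlock hk y) * Qb (tailBlock k x) (tailBlock k y)) P
    (by
      intro i hki hin x y y' hy
      obtain ⟨r, rfl⟩ := Nat.exists_eq_add_of_le hki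
      have hhead : headBlock hk y = headBlock hk y' :=
        (headBlock_eq_iff hk _ _).2 fun j hj => hy j (by omega)
      rw [add_assoc, hQ, hQ, hhead]
      congr 1
      exact hQb.2.2 (r + 1) (by omega) _ _ _ fun j hj => hy _ (by simp; omega))
    hP.2.2 (Nat.le_add_right k t) ht.le
  simp only [← hfact] at hfactor
  have hc : ∀ x y, relMass p (windowRel n 0 (k + t) 0 (k + t)) (x, y) =
      Qa (headBlock hk x) (headBlock hk y) *
        (∑ z ∈ prefixClass t (tailBlock k x), Qb z (tailBlock k y)) *
        ∑ y' ∈ prefixClass (k + t) y, P y' x := fun x y => by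
    rw [relMass_windowRel_zero, hfactor.1, hQ]
  have hb : ∀ x y, relMass p (windowRel n 0 (k + t + 1) 0 (k + t)) (x, y) =
      Qa (headBlock hk x) (headBlock hk y) *
        (∑ z ∈ prefixClass (t + 1) (tailBlock k x), Qb z (tailBlock k y)) *
        ∑ y' ∈ prefixClass (k + t) y, P y' x := fun x y => by
    rw [relMass_windowRel_zero, hfactor.2 ht, add_assoc, hQ]
  have key : ∀ ω, relMass p (windowRel n 0 (k + t) 0 (k + t)) ω *
        relMass p (windowRel n k (k + t + 1) k (k + t)) ω =
      relMass p (windowRel n 0 (k + t + 1) 0 (k + t)) ω *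
        relMass p (windowRel n k (k + t) k (k + t)) ω := by
    rintro ⟨x, y⟩
    rw [relMass_windowRel_eq_sum hk (by omega) (by omega),
      relMass_windowRel_eq_sum hk (by omega) (by omega), mul_sum, mul_sum]
    refine sum_congr rfl fun w _ => ?_
    simp only [hc, hb, headBlock_replaceHead, tailBlock_replaceHead]
    ring
  simp only [windowEntropy, relEntropy]
  rw [← sub_eq_zero]
  simp only [← sum_neg_distrib, ← sum_add_distrib, ← sum_sub_distrib]
  refine sum_eq_zero fun ω _ => ?_
  rcases (hp ω).eq_or_lt with h0 | h0
  · simp [← h0]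
  · have pos : ∀ a s c t, relMass p (windowRel n a s c t) ω ≠ 0 := fun a s c t =>
      (relMass_pos hp ⟨fun _ _ _ => rfl, fun _ _ _ => rfl⟩ h0).ne'
    have := congrArg Real.log (key ω)
    rw [Real.log_mul (pos _ _ _ _) (pos _ _ _ _), Real.log_mul (pos _ _ _ _) (pos _ _ _ _)] at this
    linear_combination -p ω * this

end Window

/-- Block superadditivity of directed information (Lemma 6 of the paper): if the joint
distribution factors as
`p(x^n,y^n) = Qa(x_1^k ‖ y_1^{k-1}) Qb(x_{k+1}^n ‖ y_{k+1}^{n-1}) P(y^n ‖ x^n)`,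
then `I(X^n → Y^n) ≥ I(X^k → Y^k) + I(X_{k+1}^n → Y_{k+1}^n)`. -/
theorem di_block_superadditive {X Y : Type} [Fintype X] [DecidableEq X]
    [Fintype Y] [DecidableEq Y]
    (n k : ℕ) (hk : k ≤ n)
    (p : (Fin n → X) × (Fin n → Y) → ℝ)
    (Qa : (Fin k → X) → (Fin k → Y) → ℝ)
    (Qb : (Fin (n - k) → X) → (Fin (n - k) → Y) → ℝ)
    (Pch : (Fin n → Y) → (Fin n → X) → ℝ)
    (hQa : IsCausalIn k Qa) (hQb : IsCausalIn (n - k) Qb) (hPch : IsCausalCh n Pch)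
    (hfact : ∀ x y, p (x, y) =
      Qa (fun j : Fin k => x ⟨j.val, by have := j.isLt; omega⟩)
         (fun j : Fin k => y ⟨j.val, by have := j.isLt; omega⟩) *
      Qb (fun j : Fin (n - k) => x ⟨k + j.val, by have := j.isLt; omega⟩)
         (fun j : Fin (n - k) => y ⟨k + j.val, by have := j.isLt; omega⟩) *
      Pch y x) :
    (∑ i : Fin k,
        condMI p (fun ω => ω.2 ⟨i.val, by have := i.isLt; omega⟩)
          (fun ω => fun j : Fin (i.val + 1) =>
            ω.1 ⟨j.val, by have h1 := j.isLt; have h2 := i.isLt; omega⟩)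
          (fun ω => fun j : Fin i.val =>
            ω.2 ⟨j.val, by have h1 := j.isLt; have h2 := i.isLt; omega⟩)) +
      (∑ i : Fin (n - k),
        condMI p (fun ω => ω.2 ⟨k + i.val, by have := i.isLt; omega⟩)
          (fun ω => fun j : Fin (i.val + 1) =>
            ω.1 ⟨k + j.val, by have h1 := j.isLt; have h2 := i.isLt; omega⟩)
          (fun ω => fun j : Fin i.val =>
            ω.2 ⟨k + j.val, by have h1 := j.isLt; have h2 := i.isLt; omega⟩)) ≤
    ∑ i : Fin n,
        condMI p (fun ω => ω.2 i)
          (fun ω => fun j : Fin (i.val + 1) =>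
            ω.1 ⟨j.val, by have h1 := j.isLt; have h2 := i.isLt; omega⟩)
          (fun ω => fun j : Fin i.val =>
            ω.2 ⟨j.val, by have h1 := j.isLt; have h2 := i.isLt; omega⟩) := by
  have hp : ∀ ω, 0 ≤ p ω := fun ω => by
    rw [← Prod.mk.eta (p := ω), hfact]
    exact mul_nonneg (mul_nonneg (hQa.1 _ _) (hQb.1 _ _)) (hPch.1 _ _)
  set D : ℕ → ℕ → ℝ := fun a i =>
    windowEntropy p 0 0 a (i + 1) + windowEntropy p a (i + 1) a i -
      windowEntropy p a (i + 1) a (i + 1) - windowEntropy p 0 0 a i with hD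
  have hfull : ∀ (i : ℕ) (hi : i < n),
      condMI p (fun ω => ω.2 ⟨i, hi⟩) (fun ω => fun j : Fin (i + 1) => ω.1 ⟨j.val, by omega⟩)
        (fun ω => fun j : Fin i => ω.2 ⟨j.val, by omega⟩) = D 0 i := fun i hi =>
    condMI_eq_windowEntropy hp (Nat.zero_le i) hi _ _
      (fun ω ω' => (headBlock_eq_iff (by omega) ω.1 ω'.1).trans (by simp))
      (fun ω ω' => (headBlock_eq_iff (by omega) ω.2 ω'.2).trans (by simp))
  have window : ∀ {α : Type} (r : ℕ) (hr : k + r ≤ n) (x x' : Fin n → α),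
      ((fun j : Fin r => x' ⟨k + j.val, by omega⟩) = fun j : Fin r => x ⟨k + j.val, by omega⟩) ↔
        ∀ j : Fin n, k ≤ j → (j : ℕ) < k + r → x' j = x j := by
    intro α r hr x x'
    refine ⟨fun h j hj hj' => ?_, fun h => funext fun j => h _ (by simp) (by simp)⟩
    have := congrFun h ⟨j - k, by omega⟩
    simpa [Nat.add_sub_cancel' hj] using this
  have htail : ∀ (i : ℕ) (hi : i < n - k),
      condMI p (fun ω => ω.2 ⟨k + i, by omega⟩)
        (fun ω => fun j : Fin (i + 1) => ω.1 ⟨k + j.val, by omega⟩)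
        (fun ω => fun j : Fin i => ω.2 ⟨k + j.val, by omega⟩) = D k (k + i) := fun i hi =>
    condMI_eq_windowEntropy hp (Nat.le_add_right k i) _ _ _
      (fun ω ω' => window (i + 1) (by omega) ω.1 ω'.1)
      (fun ω ω' => window i (by omega) ω.2 ω'.2)
  rw [sum_congr rfl fun (i : Fin k) _ => hfull i (by omega),
    sum_congr rfl fun (i : Fin n) _ => hfull i i.isLt,
    sum_congr rfl fun (i : Fin (n - k)) _ => htail i i.isLt,
    Fin.sum_univ_eq_sum_range (D 0), Fin.sum_univ_eq_sum_range (D 0),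
    Fin.sum_univ_eq_sum_range (fun i => D k (k + i))]
  have hsplit : ∑ i ∈ range n, D 0 i =
      ∑ i ∈ range k, D 0 i + ∑ i ∈ range (n - k), D 0 (k + i) := by
    rw [← sum_range_add, Nat.add_sub_cancel' hk]
  have telescope : ∀ m, k + m ≤ n →
      ∑ i ∈ range m, D 0 (k + i) - ∑ i ∈ range m, D k (k + i) =
        windowEntropy p 0 0 0 (k + m) - windowEntropy p 0 0 k (k + m) -
          windowEntropy p 0 (k + m) 0 (k + m) + windowEntropy p k (k + m) k (k + m) -
          windowEntropy p 0 0 0 k + windowEntropy p 0 k 0 k := by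
    intro m
    induction m with
    | zero =>
      intro _
      have hempty : windowEntropy p 0 0 k k = windowEntropy p k k k k := by
        have : windowRel (X := X) (Y := Y) n 0 0 k k = windowRel n k k k k := by
          funext ω ω'
          simp only [windowRel, eq_iff_iff]
          refine and_congr_left fun _ => ⟨fun _ j h1 h2 => ?_, fun _ j h1 h2 => ?_⟩ <;> omega
        rw [windowEntropy, windowEntropy, this]
      simp only [range_zero, sum_empty, add_zero, hempty]
      ring
    | succ m ih =>
      intro hm
      have hstep := windowEntropy_add_eq hk hp hQb hPch hfact (t := m) (by omega)
      rw [sum_range_succ, sum_range_succ]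
      simp only [hD] at ih ⊢
      rw [← add_assoc k m 1]
      linarith [ih (by omega)]
  have hall := telescope (n - k) (by omega)
  rw [Nat.add_sub_cancel' hk] at hall
  linarith [windowEntropy_data_processing hp hk]
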